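/- arXiv:1504.03389 — 2 statements merged into one kernel-verified Lean document; each statement's English description precedes it below -/
import Mathlib

section
/- Under the point-mass contaminated model F = (1−ε)F₀ + ε δ_{K e₁}, for every unit vector u ∈ ℝ^p with s = u₁² (u₁ the first coordinate of u), the kurtosis of the projection y = ⟨u, x⟩ under F (the fourth central moment divided by the squared variance) equals g(s) = (a + b s K² + c s² K⁴) / ((1−ε)² (1 + ε s K²)²), where a = (1−ε)A, b = 6ε²(1−ε), and c = ε(1 − 4ε + 6ε² − 3ε³); in particular the kurtosis of ⟨u, x⟩ under F depends on u only through s = u₁². -/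
open MeasureTheory
open scoped RealInnerProductSpace ENNReal

/-!
Rotation invariance makes the law of `⟪u, x⟫` under `F₀` the same for all unit vectors `u`.
Comparing `u` with `-u` shows that this law is symmetric, so its odd moments vanish. The mean of the
projection under the contaminated measure is therefore `m = ε t`, where `t` is the projection of the
contaminating point. For `n = 2` and `n = 4` the binomial expansion of `(⟪u, x⟫ - m) ^ n` leaves
only even moments under `F₀`, hence only even powers of `t`, while the point mass contributes
`ε ((1 - ε) t) ^ n`, so the kurtosis is a function of `t ^ 2`.
-/

open ProbabilityTheory

section Moments

variable {Ω : Type*} {mΩ : MeasurableSpace Ω} {μ : Measure Ω} {X : Ω → ℝ}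

/-- The kurtosis of a real random variable: its fourth central moment divided by the square of its
variance. It is not reduced by `3`, the value for a normal law (no excess kurtosis), and is `0` when
the variance vanishes. -/
noncomputable def kurtosis (X : Ω → ℝ) (μ : Measure Ω) : ℝ :=
  centralMoment X 4 μ / centralMoment X 2 μ ^ 2

lemma memLp_of_integrable_norm_pow {E : Type*} [NormedAddCommGroup E] {f : Ω → E} {n : ℕ}
    (hf : AEStronglyMeasurable f μ) (hn : n ≠ 0) (hint : Integrable (fun x => ‖f x‖ ^ n) μ) :
    MemLp f n μ :=
  (integrable_norm_rpow_iff hf (by simpa) (ENNReal.natCast_ne_top n)).1 (by simpa using hint)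

lemma integrable_pow_of_memLp [IsFiniteMeasure μ] {k n : ℕ} (hX : MemLp X n μ) (hkn : k ≤ n) :
    Integrable (fun x => X x ^ k) μ := by
  have hXk : MemLp X k μ := hX.mono_exponent (by exact_mod_cast hkn)
  refine (integrable_norm_iff (hX.1.pow k)).1 ?_
  simpa using hXk.integrable_norm_pow'

lemma integral_sub_const_pow [IsFiniteMeasure μ] {n : ℕ} (hX : MemLp X n μ) (c : ℝ) :
    ∫ x, (X x - c) ^ n ∂μ =
      ∑ k ∈ Finset.range (n + 1), (-c) ^ (n - k) * n.choose k * moment X k μ := by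
  simp_rw [sub_eq_add_neg, add_pow, mul_assoc]
  rw [integral_finsetSum _ fun k hk =>
    (integrable_pow_of_memLp hX (Finset.mem_range_succ_iff.1 hk)).mul_const _]
  refine Finset.sum_congr rfl fun k _ => ?_
  rw [integral_mul_const, moment_def]
  exact (mul_comm _ _).trans (mul_assoc _ _ _)

lemma moment_eq_zero_of_identDistrib_neg (h : IdentDistrib X (-X) μ μ) {n : ℕ} (hn : Odd n) :
    moment X n μ = 0 := by
  have hsymm : moment X n μ = -moment X n μ := calc
    ∫ x, X x ^ n ∂μ = ∫ x, (-X x) ^ n ∂μ := h.pow.integral_eq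
    _ = -∫ x, X x ^ n ∂μ := by simp_rw [hn.neg_pow, integral_neg]
  linarith

end Moments

section PointContamination

variable {Ω : Type*} {mΩ : MeasurableSpace Ω} {μ : Measure Ω} {X : Ω → ℝ} {ε : ℝ}

/-- The point-mass contaminated model `(1 - ε) μ + ε δ_z`, meant for `ε ∈ [0, 1]`: outside this
range a negative weight is truncated to `0`. -/
noncomputable def pointContamination (μ : Measure Ω) (ε : ℝ) (z : Ω) : Measure Ω :=
  ENNReal.ofReal (1 - ε) • μ + ENNReal.ofReal ε • Measure.dirac z

variable [MeasurableSingletonClass Ω]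

lemma integral_pointContamination {E : Type*} [NormedAddCommGroup E] [NormedSpace ℝ E]
    [CompleteSpace E] {f : Ω → E} (hε : ε ∈ Set.Icc 0 1) (hf : Integrable f μ) (z : Ω) :
    ∫ x, f x ∂pointContamination μ ε z = (1 - ε) • ∫ x, f x ∂μ + ε • f z := by
  have hfz : Integrable f (Measure.dirac z) := integrable_dirac enorm_lt_top
  rw [pointContamination, integral_add_measure (hf.smul_measure ENNReal.ofReal_ne_top)
      (hfz.smul_measure ENNReal.ofReal_ne_top), integral_smul_measure, integral_smul_measure,
    integral_dirac, ENNReal.toReal_ofReal (sub_nonneg.2 hε.2), ENNReal.toReal_ofReal hε.1]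

lemma centralMoment_pointContamination [IsFiniteMeasure μ] {n : ℕ} (hn : n ≠ 0)
    (hε : ε ∈ Set.Icc 0 1) (hX : MemLp X n μ) (hmean : μ[X] = 0) (z : Ω) :
    centralMoment X n (pointContamination μ ε z) =
      (1 - ε) * ∫ x, (X x - ε * X z) ^ n ∂μ + ε * ((1 - ε) * X z) ^ n := by
  have hXint : Integrable X μ := hX.integrable (by exact_mod_cast Nat.one_le_iff_ne_zero.2 hn)
  have hmean' : ∫ x, X x ∂pointContamination μ ε z = ε * X z := by
    simp [integral_pointContamination hε hXint, hmean]
  have hpow : Integrable (fun x => (X x - ε * X z) ^ n) μ :=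
    integrable_pow_of_memLp (hX.sub (memLp_const _)) le_rfl
  simp only [centralMoment, hmean', Pi.pow_apply, Pi.sub_apply]
  rw [integral_pointContamination hε hpow, smul_eq_mul, smul_eq_mul]
  ring

variable [IsProbabilityMeasure μ]

lemma centralMoment_two_pointContamination (hε : ε ∈ Set.Icc 0 1) (hX : MemLp X 2 μ)
    (hmean : μ[X] = 0) (z : Ω) :
    centralMoment X 2 (pointContamination μ ε z) =
      (1 - ε) * (moment X 2 μ + ε * X z ^ 2) := by
  have h₀ : moment X 0 μ = 1 := by simp [moment]
  have h₁ : moment X 1 μ = 0 := by rw [moment_one, hmean]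
  have hshift (c : ℝ) : ∫ x, (X x - c) ^ 2 ∂μ = c ^ 2 + moment X 2 μ := by
    simp [integral_sub_const_pow hX, Finset.sum_range_succ, h₀, h₁]
  rw [centralMoment_pointContamination two_ne_zero hε hX hmean, hshift]
  ring

lemma centralMoment_four_pointContamination (hε : ε ∈ Set.Icc 0 1) (hX : MemLp X 4 μ)
    (hmean : μ[X] = 0) (hskew : moment X 3 μ = 0) (z : Ω) :
    centralMoment X 4 (pointContamination μ ε z) =
      (1 - ε) * moment X 4 μ + 6 * ε ^ 2 * (1 - ε) * moment X 2 μ * X z ^ 2 +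
        ε * (1 - 4 * ε + 6 * ε ^ 2 - 3 * ε ^ 3) * X z ^ 4 := by
  have h₀ : moment X 0 μ = 1 := by simp [moment]
  have h₁ : moment X 1 μ = 0 := by rw [moment_one, hmean]
  have hshift (c : ℝ) :
      ∫ x, (X x - c) ^ 4 ∂μ = c ^ 4 + c ^ 2 * 6 * moment X 2 μ + moment X 4 μ := by
    simp [integral_sub_const_pow hX, Finset.sum_range_succ, Nat.choose, h₀, h₁, hskew,
      Even.neg_pow (by decide : Even 4)]
  rw [centralMoment_pointContamination four_ne_zero hε hX hmean, hshift]
  ring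

end PointContamination

section RotationInvariant

variable {E : Type*} [NormedAddCommGroup E] [InnerProductSpace ℝ E] [MeasurableSpace E]

/-- Invariance of a measure under every linear isometry of the space onto itself, reflections
included. -/
def IsRotationInvariant (μ : Measure E) : Prop :=
  ∀ T : E ≃ₗᵢ[ℝ] E, μ.map T = μ

variable [BorelSpace E] {μ : Measure E}

lemma IsRotationInvariant.identDistrib_inner (hμ : IsRotationInvariant μ) {u v : E}
    (huv : ‖u‖ = ‖v‖) : IdentDistrib (fun x => ⟪u, x⟫) (fun x => ⟪v, x⟫) μ μ := by
  have hmeas (w : E) : Measurable fun x => ⟪w, x⟫ := by fun_prop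
  refine ⟨(hmeas u).aemeasurable, (hmeas v).aemeasurable, ?_⟩
  let T : E ≃ₗᵢ[ℝ] E := (ℝ ∙ (u - v))ᗮ.reflection
  have hTu : T u = v := Submodule.reflection_sub huv
  have hT (x : E) : ⟪v, T x⟫ = ⟪u, x⟫ := by rw [← hTu, T.inner_map_map]
  calc μ.map (fun x => ⟪u, x⟫) = (μ.map T).map fun x => ⟪v, x⟫ := by
        rw [Measure.map_map (hmeas v) T.continuous.measurable]
        simp only [Function.comp_def, hT]
    _ = μ.map fun x => ⟪v, x⟫ := by rw [hμ T]

lemma IsRotationInvariant.moment_inner_of_odd (hμ : IsRotationInvariant μ) (u : E) {n : ℕ}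
    (hn : Odd n) : moment (fun x => ⟪u, x⟫) n μ = 0 := by
  refine moment_eq_zero_of_identDistrib_neg ?_ hn
  simpa only [Pi.neg_def, inner_neg_left] using hμ.identDistrib_inner (norm_neg u).symm

lemma IsRotationInvariant.kurtosis_inner_pointContamination [IsProbabilityMeasure μ]
    (hμ : IsRotationInvariant μ) {u e : E} (hue : ‖u‖ = ‖e‖)
    (hmom : MemLp (fun x => ⟪e, x⟫) 4 μ) {ε : ℝ} (hε : ε ∈ Set.Icc 0 1) (z : E) :
    kurtosis (fun x => ⟪u, x⟫) (pointContamination μ ε z) =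
      ((1 - ε) * ∫ x, ⟪e, x⟫ ^ 4 ∂μ + 6 * ε ^ 2 * (1 - ε) * (∫ x, ⟪e, x⟫ ^ 2 ∂μ) * ⟪u, z⟫ ^ 2
          + ε * (1 - 4 * ε + 6 * ε ^ 2 - 3 * ε ^ 3) * (⟪u, z⟫ ^ 2) ^ 2) /
        ((1 - ε) ^ 2 * (∫ x, ⟪e, x⟫ ^ 2 ∂μ + ε * ⟪u, z⟫ ^ 2) ^ 2) := by
  have hlaw := hμ.identDistrib_inner hue
  have hmom_u : MemLp (fun x => ⟪u, x⟫) 4 μ := hlaw.memLp_iff.2 hmom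
  have hmean : ∫ x, ⟪u, x⟫ ∂μ = 0 := by
    simpa only [moment_one] using hμ.moment_inner_of_odd u odd_one
  have hmoment (n : ℕ) : moment (fun x => ⟪u, x⟫) n μ = ∫ x, ⟪e, x⟫ ^ n ∂μ :=
    hlaw.pow.integral_eq
  rw [kurtosis,
    centralMoment_four_pointContamination hε hmom_u hmean (hμ.moment_inner_of_odd u (by decide)),
    centralMoment_two_pointContamination hε (hmom_u.mono_exponent (by norm_num)) hmean,
    hmoment, hmoment, mul_pow, ← pow_mul]

theorem contaminated_projection_kurtosis_general {F₀ : Measure E} [IsProbabilityMeasure F₀]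
    (hrot : IsRotationInvariant F₀) {e : E} (he : ‖e‖ = 1)
    (hmom : MemLp (fun x => ⟪e, x⟫) 4 F₀) {ε : ℝ} (hε : ε ∈ Set.Ico 0 1) (K : ℝ)
    {u : E} (hu : ‖u‖ = 1) :
    kurtosis (fun x => ⟪u, x⟫) (pointContamination F₀ ε (K • e)) =
        ((1 - ε) * ∫ x, ⟪e, x⟫ ^ 4 ∂F₀
          + 6 * ε ^ 2 * (1 - ε) * (∫ x, ⟪e, x⟫ ^ 2 ∂F₀) * ⟪u, e⟫ ^ 2 * K ^ 2
          + ε * (1 - 4 * ε + 6 * ε ^ 2 - 3 * ε ^ 3) * (⟪u, e⟫ ^ 2) ^ 2 * K ^ 4) /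
        ((1 - ε) ^ 2 * (∫ x, ⟪e, x⟫ ^ 2 ∂F₀ + ε * ⟪u, e⟫ ^ 2 * K ^ 2) ^ 2) ∧
      ∀ w : E, ‖w‖ = 1 → ⟪w, e⟫ ^ 2 = ⟪u, e⟫ ^ 2 →
        kurtosis (fun x => ⟪w, x⟫) (pointContamination F₀ ε (K • e)) =
          kurtosis (fun x => ⟪u, x⟫) (pointContamination F₀ ε (K • e)) := by
  have hformula {v : E} (hv : ‖v‖ = 1) := hrot.kurtosis_inner_pointContamination
    (hv.trans he.symm) hmom (Set.Ico_subset_Icc_self hε) (K • e)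
  refine ⟨?_, fun w hw hwu => ?_⟩
  · rw [hformula hu, inner_smul_right, mul_pow]
    ring
  · simp only [hformula hw, hformula hu, inner_smul_right, mul_pow, hwu]

end RotationInvariant

/-- Under the point-mass contaminated model `F = (1−ε)F₀ + ε δ_{K e₁}`, the kurtosis of
the projection `y = ⟪u, x⟫` of a unit vector `u` with `s = u₁²` equals
`g(s) = (a + b s K² + c s² K⁴) / ((1−ε)² (1 + ε s K²)²)` with `a = (1−ε)A`,
`b = 6ε²(1−ε)`, `c = ε(1 − 4ε + 6ε² − 3ε³)`; in particular the kurtosis depends on `u`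
only through `s = u₁²`. -/
theorem contaminated_projection_kurtosis {p : ℕ} (hp : 0 < p)
    (F₀ : Measure (EuclideanSpace ℝ (Fin p))) [IsProbabilityMeasure F₀]
    (hrot : ∀ T : EuclideanSpace ℝ (Fin p) ≃ₗᵢ[ℝ] EuclideanSpace ℝ (Fin p),
      Measure.map (⇑T) F₀ = F₀)
    (hmom : Integrable (fun x => ‖x‖ ^ 4) F₀)
    (hcov : ∫ x, (x ⟨0, hp⟩) ^ 2 ∂F₀ = 1)
    (A : ℝ) (hA : A = ∫ x, (x ⟨0, hp⟩) ^ 4 ∂F₀)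
    (ε K : ℝ) (hε : 0 < ε) (hε1 : ε < 1) (hK : 0 < K)
    (F : Measure (EuclideanSpace ℝ (Fin p)))
    (hF : F = ENNReal.ofReal (1 - ε) • F₀ +
      ENNReal.ofReal ε • Measure.dirac (K • EuclideanSpace.single (⟨0, hp⟩ : Fin p) 1))
    (kurt : EuclideanSpace ℝ (Fin p) → ℝ)
    (hkurt : ∀ v, kurt v =
      (∫ x, (⟪v, x⟫ - ∫ y, ⟪v, y⟫ ∂F) ^ 4 ∂F) /
        (∫ x, (⟪v, x⟫ - ∫ y, ⟪v, y⟫ ∂F) ^ 2 ∂F) ^ 2)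
    (u : EuclideanSpace ℝ (Fin p)) (hu : ‖u‖ = 1) :
    kurt u = ((1 - ε) * A + 6 * ε ^ 2 * (1 - ε) * (u ⟨0, hp⟩ ^ 2) * K ^ 2
        + ε * (1 - 4 * ε + 6 * ε ^ 2 - 3 * ε ^ 3) * (u ⟨0, hp⟩ ^ 2) ^ 2 * K ^ 4) /
      ((1 - ε) ^ 2 * (1 + ε * (u ⟨0, hp⟩ ^ 2) * K ^ 2) ^ 2) ∧
    ∀ w : EuclideanSpace ℝ (Fin p), ‖w‖ = 1 → w ⟨0, hp⟩ ^ 2 = u ⟨0, hp⟩ ^ 2 →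
      kurt w = kurt u := by
  subst hA hF
  obtain rfl : kurt = fun v => kurtosis (fun x => ⟪v, x⟫) (pointContamination F₀ ε _) :=
    funext hkurt
  have hmem : MemLp (fun x : EuclideanSpace ℝ (Fin p) => x) 4 F₀ :=
    memLp_of_integrable_norm_pow (by fun_prop) four_ne_zero hmom
  simpa [hcov, EuclideanSpace.inner_single_left, EuclideanSpace.inner_single_right] using
    contaminated_projection_kurtosis_general hrot (e := EuclideanSpace.single ⟨0, hp⟩ 1) (by simp)
      (hmem.const_inner _) ⟨hε.le, hε1⟩ K hu
end

section
/- If 0 < ε < 1/3 and A > 3/2, then the function g(s) = ((1−ε)A + 6ε²(1−ε) K² s + ε(1−4ε+6ε²−3ε³) K⁴ s²) / ((1−ε)²(1 + ε K² s)²) has a unique critical point s* = (A − 3ε)/((1 − 3ε) K²) > 0 in (0, ∞); g is strictly decreasing on [0, s*] and strictly increasing on [s*, ∞). In particular g has no local maximum in the open interval (0, 1), and the maximum of g over [0, 1] is attained at s = 0 or at s = 1. -/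
/-!
The derivative of a quadratic divided by the square of an affine function is an affine function
divided by the cube of the same affine function: the `s ^ 2` terms cancel. For the kurtosis
function `g` this gives
`g'(s) = 2εK⁴(1 − 3ε) / ((1 − ε)(1 + εK²s)³) * (s − s*)`,
whose first factor is positive for `s ≥ 0`, so `g` decreases up to `s*` and increases afterwards.
-/

open Set Filter Topology

section ValleyShaped

variable {α β : Type*} [LinearOrder α] {f : α → β} {a b c x : α}

theorem le_max_of_antitoneOn_Icc_of_monotoneOn_Icc [LinearOrder β]
    (hanti : AntitoneOn f (Icc a c)) (hmono : MonotoneOn f (Icc c b)) (hx : x ∈ Icc a b) :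
    f x ≤ max (f a) (f b) := by
  obtain ⟨hax, hxb⟩ := hx
  rcases le_total x c with hxc | hcx
  · exact le_max_of_le_left (hanti ⟨le_rfl, hax.trans hxc⟩ ⟨hax, hxc⟩ hax)
  · exact le_max_of_le_right (hmono ⟨hcx, hxb⟩ ⟨hcx.trans hxb, le_rfl⟩ hxb)

variable [TopologicalSpace α] [OrderTopology α] [DenselyOrdered α] [Preorder β]

theorem not_isLocalMax_left_of_strictMonoOn_Icc (hab : a < b) (hf : StrictMonoOn f (Icc a b)) :
    ¬ IsLocalMax f a := by
  intro hmax
  have : (𝓝[>] a).NeBot := nhdsGT_neBot_of_exists_gt ⟨b, hab⟩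
  obtain ⟨y, hle, hay, hyb⟩ :=
    ((hmax.filter_mono nhdsWithin_le_nhds).and (Ioo_mem_nhdsGT hab)).exists
  exact (hf ⟨le_rfl, hab.le⟩ ⟨hay.le, hyb.le⟩ hay).not_ge hle

theorem not_isLocalMax_right_of_strictAntiOn_Icc (hab : a < b) (hf : StrictAntiOn f (Icc a b)) :
    ¬ IsLocalMax f b := by
  intro hmax
  have : (𝓝[<] b).NeBot := nhdsLT_neBot_of_exists_lt ⟨a, hab⟩
  obtain ⟨y, hle, hay, hyb⟩ :=
    ((hmax.filter_mono nhdsWithin_le_nhds).and (Ioo_mem_nhdsLT hab)).exists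
  exact (hf ⟨hay.le, hyb.le⟩ ⟨hab.le, le_rfl⟩ hyb).not_ge hle

theorem not_isLocalMax_of_strictAntiOn_Icc_of_strictMonoOn_Icc
    (hanti : StrictAntiOn f (Icc a c)) (hmono : StrictMonoOn f (Icc c b)) (hx : x ∈ Ioo a b) :
    ¬ IsLocalMax f x := by
  rcases le_total x c with hxc | hcx
  · exact not_isLocalMax_right_of_strictAntiOn_Icc hx.1 (hanti.mono (Icc_subset_Icc_right hxc))
  · exact not_isLocalMax_left_of_strictMonoOn_Icc hx.2 (hmono.mono (Icc_subset_Icc_left hcx))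

end ValleyShaped

section DerivativeSign

variable {f w : ℝ → ℝ} {c : ℝ} {D : Set ℝ}

theorem strictAntiOn_inter_Iic_of_hasDerivAt_mul_sub (hD : Convex ℝ D)
    (hf : ∀ x ∈ D, HasDerivAt f (w x * (x - c)) x) (hw : ∀ x ∈ D, 0 < w x) :
    StrictAntiOn f (D ∩ Iic c) := by
  refine strictAntiOn_of_deriv_neg (hD.inter (convex_Iic c))
    (fun x hx ↦ (hf x hx.1).continuousAt.continuousWithinAt) fun x hx ↦ ?_
  rw [interior_inter, interior_Iic] at hx
  have hxD : x ∈ D := interior_subset hx.1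
  rw [(hf x hxD).deriv]
  exact mul_neg_of_pos_of_neg (hw x hxD) (sub_neg.2 hx.2)

theorem strictMonoOn_inter_Ici_of_hasDerivAt_mul_sub (hD : Convex ℝ D)
    (hf : ∀ x ∈ D, HasDerivAt f (w x * (x - c)) x) (hw : ∀ x ∈ D, 0 < w x) :
    StrictMonoOn f (D ∩ Ici c) := by
  refine strictMonoOn_of_deriv_pos (hD.inter (convex_Ici c))
    (fun x hx ↦ (hf x hx.1).continuousAt.continuousWithinAt) fun x hx ↦ ?_
  rw [interior_inter, interior_Ici] at hx
  have hxD : x ∈ D := interior_subset hx.1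
  rw [(hf x hxD).deriv]
  exact mul_pos (hw x hxD) (sub_pos.2 hx.2)

end DerivativeSign

theorem hasDerivAt_quadratic_div_affine_sq {𝕜 : Type*} [NontriviallyNormedField 𝕜]
    (a b c p q : 𝕜) {s : 𝕜} (hs : p + q * s ≠ 0) :
    HasDerivAt (fun s ↦ (a + b * s + c * s ^ 2) / (p + q * s) ^ 2)
      ((b * p - 2 * a * q + (2 * c * p - b * q) * s) / (p + q * s) ^ 3) s := by
  have hnum : HasDerivAt (fun s ↦ a + b * s + c * s ^ 2) (b + c * (2 * s)) s := by
    simpa using (((hasDerivAt_id' s).const_mul b).const_add a).fun_add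
      ((hasDerivAt_pow 2 s).const_mul c)
  have hden : HasDerivAt (fun s ↦ (p + q * s) ^ 2) (2 * (p + q * s) * q) s := by
    simpa using (((hasDerivAt_id' s).const_mul q).const_add p).fun_pow 2
  refine (hnum.fun_div hden (pow_ne_zero 2 hs)).congr_deriv ?_
  field_simp
  ring

/-- The kurtosis function `g`, with its parameters made explicit. It has the junk value `0` at
its pole `s = -1 / (ε * K ^ 2)`. -/
noncomputable def kurtosisFunction (ε K A s : ℝ) : ℝ :=
  ((1 - ε) * A + 6 * ε ^ 2 * (1 - ε) * K ^ 2 * s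
    + ε * (1 - 4 * ε + 6 * ε ^ 2 - 3 * ε ^ 3) * K ^ 4 * s ^ 2)
    / ((1 - ε) ^ 2 * (1 + ε * K ^ 2 * s) ^ 2)

/-- The critical point `s*` of `kurtosisFunction ε K A`; the quotient is meaningful only for
`ε ≠ 1 / 3` and `K ≠ 0`. -/
noncomputable def kurtosisCriticalPoint (ε K A : ℝ) : ℝ :=
  (A - 3 * ε) / ((1 - 3 * ε) * K ^ 2)

/-- The cofactor of `s - kurtosisCriticalPoint ε K A` in the derivative of
`kurtosisFunction ε K A` at `s`. -/
noncomputable def kurtosisSlopeFactor (ε K s : ℝ) : ℝ :=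
  2 * ε * K ^ 4 * (1 - 3 * ε) / ((1 - ε) * (1 + ε * K ^ 2 * s) ^ 3)

section Kurtosis

variable {ε K A s : ℝ}

theorem kurtosisCriticalPoint_pos (hε3 : ε < 1 / 3) (hK : K ≠ 0) (hA : 3 * ε < A) :
    0 < kurtosisCriticalPoint ε K A :=
  div_pos (by linarith) (mul_pos (by linarith) (by positivity))

theorem kurtosisSlopeFactor_pos (hε : 0 < ε) (hε3 : ε < 1 / 3) (hK : K ≠ 0) (hs : 0 ≤ s) :
    0 < kurtosisSlopeFactor ε K s := by
  have h₁ : 0 < 1 - ε := by linarith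
  have h₃ : 0 < 1 - 3 * ε := by linarith
  unfold kurtosisSlopeFactor
  positivity

theorem kurtosisFunction_eq_quadratic_div_affine_sq (hε1 : ε ≠ 1) :
    kurtosisFunction ε K A = fun s ↦
      (A + 6 * ε ^ 2 * K ^ 2 * s + ε * (1 - 3 * ε + 3 * ε ^ 2) * K ^ 4 * s ^ 2)
        / (1 + ε * K ^ 2 * s) ^ 2 / (1 - ε) := by
  have h₁ : 1 - ε ≠ 0 := sub_ne_zero.2 hε1.symm
  funext s
  rw [kurtosisFunction, div_div, eq_comm, ← mul_div_mul_left _ _ h₁]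
  congr 1 <;> ring

theorem hasDerivAt_kurtosisFunction (hε1 : ε ≠ 1) (hs : 1 + ε * K ^ 2 * s ≠ 0) :
    HasDerivAt (kurtosisFunction ε K A)
      (2 * ε * K ^ 2 * ((1 - 3 * ε) * K ^ 2 * s - (A - 3 * ε))
        / ((1 - ε) * (1 + ε * K ^ 2 * s) ^ 3)) s := by
  rw [kurtosisFunction_eq_quadratic_div_affine_sq hε1]
  refine ((hasDerivAt_quadratic_div_affine_sq _ _ _ _ _ hs).div_const (1 - ε)).congr_deriv ?_
  rw [div_div]
  congr 1 <;> ring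

theorem hasDerivAt_kurtosisFunction_slopeFactor (hε1 : ε ≠ 1) (hε3 : ε ≠ 1 / 3) (hK : K ≠ 0)
    (hs : 1 + ε * K ^ 2 * s ≠ 0) :
    HasDerivAt (kurtosisFunction ε K A)
      (kurtosisSlopeFactor ε K s * (s - kurtosisCriticalPoint ε K A)) s := by
  have h₃ : 1 - 3 * ε ≠ 0 := fun h ↦ hε3 (by linarith)
  have hcrit : (1 - 3 * ε) * K ^ 2 * kurtosisCriticalPoint ε K A = A - 3 * ε :=
    mul_div_cancel₀ _ (by positivity)
  refine (hasDerivAt_kurtosisFunction hε1 hs).congr_deriv ?_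
  rw [← hcrit, kurtosisSlopeFactor, div_mul_eq_mul_div]
  congr 1
  ring

theorem hasDerivAt_kurtosisFunction_of_nonneg (hε : 0 < ε) (hε3 : ε < 1 / 3) (hK : K ≠ 0)
    (hs : 0 ≤ s) :
    HasDerivAt (kurtosisFunction ε K A)
      (kurtosisSlopeFactor ε K s * (s - kurtosisCriticalPoint ε K A)) s :=
  hasDerivAt_kurtosisFunction_slopeFactor (by linarith) hε3.ne hK (by positivity)

theorem deriv_kurtosisFunction_eq_zero_iff (hε : 0 < ε) (hε3 : ε < 1 / 3) (hK : K ≠ 0)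
    (hs : 0 ≤ s) :
    deriv (kurtosisFunction ε K A) s = 0 ↔ s = kurtosisCriticalPoint ε K A := by
  rw [(hasDerivAt_kurtosisFunction_of_nonneg hε hε3 hK hs).deriv,
    mul_eq_zero_iff_left (kurtosisSlopeFactor_pos hε hε3 hK hs).ne', sub_eq_zero]

theorem strictAntiOn_kurtosisFunction (hε : 0 < ε) (hε3 : ε < 1 / 3) (hK : K ≠ 0) :
    StrictAntiOn (kurtosisFunction ε K A) (Icc 0 (kurtosisCriticalPoint ε K A)) :=
  strictAntiOn_inter_Iic_of_hasDerivAt_mul_sub (convex_Ici 0)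
    (fun _ ↦ hasDerivAt_kurtosisFunction_of_nonneg hε hε3 hK)
    (fun _ ↦ kurtosisSlopeFactor_pos hε hε3 hK)

theorem strictMonoOn_kurtosisFunction (hε : 0 < ε) (hε3 : ε < 1 / 3) (hK : K ≠ 0) :
    StrictMonoOn (kurtosisFunction ε K A) (Ici 0 ∩ Ici (kurtosisCriticalPoint ε K A)) :=
  strictMonoOn_inter_Ici_of_hasDerivAt_mul_sub (convex_Ici 0)
    (fun _ ↦ hasDerivAt_kurtosisFunction_of_nonneg hε hε3 hK)
    (fun _ ↦ kurtosisSlopeFactor_pos hε hε3 hK)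

theorem kurtosis_function_unique_critical_point_general
    (hε : 0 < ε) (hε3 : ε < 1 / 3) (hK : K ≠ 0) (hA : 3 * ε < A) :
    0 < kurtosisCriticalPoint ε K A ∧
    (∀ s : ℝ, 0 < s →
      (deriv (kurtosisFunction ε K A) s = 0 ↔ s = kurtosisCriticalPoint ε K A)) ∧
    StrictAntiOn (kurtosisFunction ε K A) (Icc 0 (kurtosisCriticalPoint ε K A)) ∧
    StrictMonoOn (kurtosisFunction ε K A) (Ici (kurtosisCriticalPoint ε K A)) ∧
    (∀ s ∈ Ioo (0 : ℝ) 1, ¬ IsLocalMax (kurtosisFunction ε K A) s) ∧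
    (∀ s ∈ Icc (0 : ℝ) 1,
      kurtosisFunction ε K A s ≤ max (kurtosisFunction ε K A 0) (kurtosisFunction ε K A 1)) := by
  have hpos : 0 < kurtosisCriticalPoint ε K A := kurtosisCriticalPoint_pos hε3 hK hA
  have hanti := strictAntiOn_kurtosisFunction (A := A) hε hε3 hK
  have hmono : StrictMonoOn (kurtosisFunction ε K A) (Ici (kurtosisCriticalPoint ε K A)) :=
    (strictMonoOn_kurtosisFunction hε hε3 hK).mono
      (subset_inter (Ici_subset_Ici.2 hpos.le) Subset.rfl)
  have hmono_Icc : StrictMonoOn (kurtosisFunction ε K A) (Icc (kurtosisCriticalPoint ε K A) 1) :=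
    hmono.mono Icc_subset_Ici_self
  exact ⟨hpos, fun _ hs ↦ deriv_kurtosisFunction_eq_zero_iff hε hε3 hK hs.le, hanti, hmono,
    fun _ ↦ not_isLocalMax_of_strictAntiOn_Icc_of_strictMonoOn_Icc hanti hmono_Icc,
    fun _ ↦ le_max_of_antitoneOn_Icc_of_monotoneOn_Icc hanti.antitoneOn hmono_Icc.monotoneOn⟩

end Kurtosis

/-- If `0 < ε < 1/3` and `A > 3/2`, then the kurtosis function
`g(s) = ((1−ε)A + 6ε²(1−ε)K²s + ε(1−4ε+6ε²−3ε³)K⁴s²) / ((1−ε)²(1+εK²s)²)` has a unique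
critical point `s* = (A − 3ε)/((1 − 3ε)K²) > 0` in `(0, ∞)`, is strictly decreasing on
`[0, s*]` and strictly increasing on `[s*, ∞)`; in particular `g` has no local maximum
in `(0, 1)` and the maximum of `g` over `[0, 1]` is attained at `0` or at `1`. -/
theorem kurtosis_function_unique_critical_point (ε K A : ℝ)
    (hε : 0 < ε) (hε3 : ε < 1 / 3) (hK : 0 < K) (hA : 3 / 2 < A)
    (g : ℝ → ℝ)
    (hg : ∀ s, g s = ((1 - ε) * A + 6 * ε ^ 2 * (1 - ε) * K ^ 2 * s
        + ε * (1 - 4 * ε + 6 * ε ^ 2 - 3 * ε ^ 3) * K ^ 4 * s ^ 2)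
        / ((1 - ε) ^ 2 * (1 + ε * K ^ 2 * s) ^ 2))
    (sstar : ℝ) (hsstar : sstar = (A - 3 * ε) / ((1 - 3 * ε) * K ^ 2)) :
    0 < sstar ∧
    (∀ s : ℝ, 0 < s → (deriv g s = 0 ↔ s = sstar)) ∧
    StrictAntiOn g (Set.Icc 0 sstar) ∧
    StrictMonoOn g (Set.Ici sstar) ∧
    (∀ s ∈ Set.Ioo (0 : ℝ) 1, ¬ IsLocalMax g s) ∧
    (∀ s ∈ Set.Icc (0 : ℝ) 1, g s ≤ max (g 0) (g 1)) := by
  obtain rfl : g = kurtosisFunction ε K A := funext hg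
  exact hsstar ▸ kurtosis_function_unique_critical_point_general hε hε3 hK.ne' (by linarith)
end
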